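/- arXiv:1710.03665 — 2 statements merged into one kernel-verified Lean document; each statement's English description precedes it below -/
import Mathlib

section
/- For every dimension n ≥ 1 there exists a net (ψ_ε)_{ε∈(0,1]} of smooth compactly supported functions ψ_ε : ℝⁿ → ℝ with the following properties: (i) supp ψ_ε is contained in the closed unit ball for every ε; (ii) ∫_{ℝⁿ} ψ_ε(x) dx = 1 for every ε; (iii) for every multi-index α there exists p ∈ ℝ such that sup_{x∈ℝⁿ} |∂^α ψ_ε(x)| = O(ε^{−p}) as ε → 0⁺; (iv) for every j ∈ ℕ there exists ε₀ ∈ (0,1] such that for every multi-index α with 1 ≤ |α| ≤ j and every ε ≤ ε₀ one has ∫_{ℝⁿ} x^α ψ_ε(x) dx = 0; (v) for every ν > 0 there exists ε₀ ∈ (0,1] such that ∫_{ℝⁿ} |ψ_ε(x)| dx ≤ 1 + ν for all ε ≤ ε₀. -/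
open MeasureTheory Filter Topology

/-- The partial derivative of a scalar function on ℝⁿ in the `i`-th coordinate direction. -/
noncomputable def pderiv1 {n : ℕ} (i : Fin n) (f : EuclideanSpace ℝ (Fin n) → ℝ) :
    EuclideanSpace ℝ (Fin n) → ℝ :=
  fun x => fderiv ℝ f x (EuclideanSpace.single i 1)

/-- The iterated partial derivative `∂^α` for a multi-index `α : Fin n → ℕ`. -/
noncomputable def mpderiv {n : ℕ} (α : Fin n → ℕ) (f : EuclideanSpace ℝ (Fin n) → ℝ) :
    EuclideanSpace ℝ (Fin n) → ℝ :=
  (List.finRange n).foldr (fun i g => (pderiv1 i)^[α i] g) f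

/-!
Write `φ_r(x) = r⁻ⁿ φ(x / r)`. Dilation multiplies every moment of degree `k` by `r ^ k`, so
`(φ_r - r ^ d φ) / (1 - r ^ d)` keeps the integral and the vanishing moments of `φ`, and its moments
of degree `d` vanish; its `L¹` norm is at most `(1 + r ^ d) / (1 - r ^ d)` times that of `φ`,
a factor close to `1` for small `r`. Starting from a nonnegative bump function and removing the
degrees `1, 2, …, m` in turn gives a mollifier `φ_m` with `L¹` norm below `1 + 1 / (m + 1)`.
The net is `ψ_ε = φ_{M(ε)}`, where `M(ε) → ∞` as `ε → 0⁺` so slowly that the derivatives of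
`φ_{M(ε)}` with every exponent at most `M(ε)` are bounded by `ε⁻¹`.
-/

open Module (finrank)
open scoped ContDiff

section PartialDerivatives

variable {n : ℕ} {f : EuclideanSpace ℝ (Fin n) → ℝ}

lemma contDiff_pderiv1 (hf : ContDiff ℝ ∞ f) (i : Fin n) : ContDiff ℝ ∞ (pderiv1 i f) :=
  (hf.fderiv_right le_rfl).clm_apply contDiff_const

lemma hasCompactSupport_pderiv1 (hf : HasCompactSupport f) (i : Fin n) :
    HasCompactSupport (pderiv1 i f) :=
  hf.fderiv_apply (𝕜 := ℝ) _

lemma mpderiv_induction (p : (EuclideanSpace ℝ (Fin n) → ℝ) → Prop)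
    (hp : ∀ i g, p g → p (pderiv1 i g)) (hf : p f) (α : Fin n → ℕ) : p (mpderiv α f) :=
  List.foldrRecOn _ _ hf fun _ hg i _ => Set.MapsTo.iterate (s := {g | p g}) (hp i) (α i) hg

lemma contDiff_mpderiv (hf : ContDiff ℝ ∞ f) (α : Fin n → ℕ) : ContDiff ℝ ∞ (mpderiv α f) :=
  mpderiv_induction (ContDiff ℝ ∞) (fun i _ hg => contDiff_pderiv1 hg i) hf α

lemma hasCompactSupport_mpderiv (hf : HasCompactSupport f) (α : Fin n → ℕ) :
    HasCompactSupport (mpderiv α f) :=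
  mpderiv_induction HasCompactSupport (fun i _ hg => hasCompactSupport_pderiv1 hg i) hf α

lemma exists_forall_abs_mpderiv_le (hf : ContDiff ℝ ∞ f) (hf' : HasCompactSupport f)
    (β : Fin n → ℕ) : ∃ C, ∀ α ≤ β, ∀ x, |mpderiv α f x| ≤ C := by
  choose C hC using fun α =>
    (hasCompactSupport_mpderiv hf' α).exists_bound_of_continuous (contDiff_mpderiv hf α).continuous
  obtain ⟨D, hD⟩ := ((Set.finite_Iic β).image C).bddAbove
  exact ⟨D, fun α hα x => (hC α x).trans (hD ⟨α, hα, rfl⟩)⟩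

end PartialDerivatives

lemma exists_tendsto_atTop_eventually_comp_le {ι R : Type*} [Semiring R] [LinearOrder R]
    [IsStrictOrderedRing R] [FloorSemiring R] {l : Filter ι} {u : ι → R} (hu : Tendsto u l atTop)
    (B : ℕ → R) : ∃ M : ι → ℕ, Tendsto M l atTop ∧ ∀ᶠ a in l, B (M a) ≤ u a := by
  have hlarge (k : ℕ) : ∀ᶠ a in l, k ≤ ⌊u a⌋₊ ∧ B k ≤ u a :=
    ((tendsto_nat_floor_atTop.comp hu).eventually_ge_atTop k).and (hu.eventually_ge_atTop (B k))
  refine ⟨fun a => Nat.findGreatest (fun k => B k ≤ u a) ⌊u a⌋₊, tendsto_atTop.2 fun k => ?_, ?_⟩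
  · filter_upwards [hlarge k] with a ha using Nat.le_findGreatest ha.1 ha.2
  · filter_upwards [hlarge 0] with a ha using
      Nat.findGreatest_spec (P := fun k => B k ≤ u a) ha.1 ha.2

lemma exists_mem_Ioc_of_eventually_nhdsGT {X : Type*} [LinearOrder X] [DenselyOrdered X]
    [TopologicalSpace X] [OrderTopology X] {a b : X} (hab : a < b) {p : X → Prop}
    (hp : ∀ᶠ x in 𝓝[>] a, p x) : ∃ c ∈ Set.Ioc a b, ∀ x, a < x → x ≤ c → p x := by
  obtain ⟨c, hac, hc⟩ := (nhdsGT_basis_Ioc_of_exists_gt ⟨b, hab⟩).eventually_iff.1 hp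
  exact ⟨min c b, ⟨lt_min hac hab, min_le_right c b⟩,
    fun x hax hxc => hc ⟨hax, hxc.trans (min_le_left c b)⟩⟩

variable {E : Type*} [NormedAddCommGroup E] [NormedSpace ℝ E]

/-- Positive homogeneity of degree `d`. The moments of a function on `E` are its integrals against
positively homogeneous functions; on `ℝⁿ` these include all the monomials. -/
def IsPosHomogeneous (d : ℕ) (P : E → ℝ) : Prop :=
  ∀ ⦃r : ℝ⦄, 0 < r → ∀ x, P (r • x) = r ^ d * P x

lemma isPosHomogeneous_one : IsPosHomogeneous 0 (1 : E → ℝ) := fun r _ x => by simp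

lemma isPosHomogeneous_monomial {n : ℕ} (α : Fin n → ℕ) :
    IsPosHomogeneous (∑ i, α i) fun x : EuclideanSpace ℝ (Fin n) => ∏ i, x i ^ α i :=
  fun r _ x => by
    simp only [PiLp.smul_apply, smul_eq_mul, mul_pow, Finset.prod_mul_distrib,
      Finset.prod_pow_eq_pow_sum]

/-- The dilation `φ_r(x) = r⁻ⁿ φ(x / r)`, normalised to preserve integrals, where `n = dim E`. -/
noncomputable def dilate (r : ℝ) (φ : E → ℝ) (x : E) : ℝ :=
  (r ^ finrank ℝ E)⁻¹ * φ (r⁻¹ • x)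

/-- The combination `(φ_r - r ^ d φ) / (1 - r ^ d)` of `φ` and its dilation (Richardson
extrapolation), used for `0 < r < 1` and `0 < d`, where it has the same integral as `φ` and its
moments of degree `d` vanish. At `r ^ d = 1` the division makes it zero. -/
noncomputable def extrapolate (d : ℕ) (r : ℝ) (φ : E → ℝ) (x : E) : ℝ :=
  (1 - r ^ d)⁻¹ * (dilate r φ x - r ^ d * φ x)

section Dilation

variable {d k : ℕ} {r : ℝ} {φ P : E → ℝ}

lemma abs_dilate (hr : 0 ≤ r) (x : E) : |dilate r φ x| = dilate r (fun y => |φ y|) x := by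
  rw [dilate, dilate, abs_mul, abs_of_nonneg (by positivity)]

lemma IsPosHomogeneous.mul_dilate (hP : IsPosHomogeneous k P) (hr : 0 < r) (x : E) :
    P x * dilate r φ x = r ^ k * dilate r (fun y => P y * φ y) x := by
  have hPx : P x = r ^ k * P (r⁻¹ • x) := by rw [← hP hr, smul_inv_smul₀ hr.ne']
  rw [dilate, dilate, hPx]
  ring

lemma contDiff_dilate {s : ℕ∞ω} (hφ : ContDiff ℝ s φ) (r : ℝ) : ContDiff ℝ s (dilate r φ) :=
  contDiff_const.mul (hφ.comp (contDiff_const_smul _))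

lemma contDiff_extrapolate {s : ℕ∞ω} (hφ : ContDiff ℝ s φ) (d : ℕ) (r : ℝ) :
    ContDiff ℝ s (extrapolate d r φ) :=
  contDiff_const.mul ((contDiff_dilate hφ r).sub (contDiff_const.mul hφ))

lemma support_dilate_subset {K : Set E} (hK : Balanced ℝ K) (hφ : φ.support ⊆ K) (hr₀ : r ≠ 0)
    (hr₁ : |r| ≤ 1) : (dilate r φ).support ⊆ K := fun x hx => by
  have hx' : r⁻¹ • x ∈ K := hφ (right_ne_zero_of_mul hx)
  simpa only [smul_inv_smul₀ hr₀] using hK.smul_mem hr₁ hx'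

lemma support_extrapolate_subset {K : Set E} (hK : Balanced ℝ K) (hφ : φ.support ⊆ K)
    (hr₀ : r ≠ 0) (hr₁ : |r| ≤ 1) : (extrapolate d r φ).support ⊆ K := fun x hx => by
  by_contra hxK
  have hφx : φ x = 0 := Function.notMem_support.1 fun h => hxK (hφ h)
  have hdx : dilate r φ x = 0 :=
    Function.notMem_support.1 fun h => hxK (support_dilate_subset hK hφ hr₀ hr₁ h)
  exact hx (by simp [extrapolate, hφx, hdx])

variable [FiniteDimensional ℝ E] [MeasurableSpace E] [BorelSpace E]
  {μ : Measure E} [μ.IsAddHaarMeasure]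

lemma integrable_dilate (hφ : Integrable φ μ) (hr : r ≠ 0) : Integrable (dilate r φ) μ :=
  (hφ.comp_smul (inv_ne_zero hr)).const_mul _

lemma integral_dilate (hr : 0 < r) : ∫ x, dilate r φ x ∂μ = ∫ x, φ x ∂μ := by
  simp only [dilate]
  rw [integral_const_mul, Measure.integral_comp_inv_smul_of_nonneg _ _ hr.le, smul_eq_mul,
    inv_mul_cancel_left₀ (by positivity)]

lemma integral_mul_extrapolate (hP : IsPosHomogeneous k P)
    (hPφ : Integrable (fun x => P x * φ x) μ) (hr : 0 < r) :
    ∫ x, P x * extrapolate d r φ x ∂μ =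
      (1 - r ^ d)⁻¹ * (r ^ k - r ^ d) * ∫ x, P x * φ x ∂μ := by
  have hpoint (x : E) : P x * extrapolate d r φ x =
      (1 - r ^ d)⁻¹ * (r ^ k * dilate r (fun y => P y * φ y) x - r ^ d * (P x * φ x)) := by
    rw [← hP.mul_dilate hr, extrapolate]
    ring
  simp only [hpoint]
  rw [integral_const_mul, integral_sub ((integrable_dilate hPφ hr.ne').const_mul _)
    (hPφ.const_mul _), integral_const_mul, integral_const_mul, integral_dilate hr]
  ring

lemma integral_abs_extrapolate_le (hφ : Integrable φ μ) (hr₀ : 0 < r) (hrd : r ^ d ≤ 1) :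
    ∫ x, |extrapolate d r φ x| ∂μ ≤ (1 - r ^ d)⁻¹ * (1 + r ^ d) * ∫ x, |φ x| ∂μ := by
  have hq : 0 ≤ (1 - r ^ d)⁻¹ := inv_nonneg.2 (sub_nonneg.2 hrd)
  have hpoint (x : E) : |extrapolate d r φ x| ≤
      (1 - r ^ d)⁻¹ * (dilate r (fun y => |φ y|) x + r ^ d * |φ x|) := by
    rw [extrapolate, abs_mul, abs_of_nonneg hq, ← abs_dilate hr₀.le]
    gcongr
    refine (abs_sub _ _).trans_eq ?_
    rw [abs_mul, abs_of_pos (pow_pos hr₀ d)]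
  have hdil := integrable_dilate hφ.abs hr₀.ne'
  calc ∫ x, |extrapolate d r φ x| ∂μ
      ≤ ∫ x, (1 - r ^ d)⁻¹ * (dilate r (fun y => |φ y|) x + r ^ d * |φ x|) ∂μ :=
        integral_mono_of_nonneg (ae_of_all _ fun x => abs_nonneg _)
          ((hdil.add (hφ.abs.const_mul _)).const_mul _) (ae_of_all _ hpoint)
    _ = (1 - r ^ d)⁻¹ * (1 + r ^ d) * ∫ x, |φ x| ∂μ := by
        rw [integral_const_mul, integral_add hdil (hφ.abs.const_mul _), integral_const_mul,
          integral_dilate hr₀]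
        ring

end Dilation

section Mollifier

variable [MeasurableSpace E]

/-- A mollifier of order `m`: a smooth function of integral one, supported in the closed unit ball,
whose moments of degrees `1, …, m` vanish. Moments are taken against all locally integrable
positively homogeneous functions, not only against polynomials. -/
structure IsMollifierOfOrder (μ : Measure E) (m : ℕ) (φ : E → ℝ) : Prop where
  contDiff : ContDiff ℝ ∞ φ
  support_subset : φ.support ⊆ Metric.closedBall 0 1
  integral_eq_one : ∫ x, φ x ∂μ = 1
  integral_mul_eq_zero : ∀ ⦃k : ℕ⦄ ⦃P : E → ℝ⦄, IsPosHomogeneous k P → LocallyIntegrable P μ →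
    1 ≤ k → k ≤ m → ∫ x, P x * φ x ∂μ = 0

namespace IsMollifierOfOrder

variable {μ : Measure E} {m : ℕ} {φ : E → ℝ} {r : ℝ}

lemma tsupport_subset (hφ : IsMollifierOfOrder μ m φ) : tsupport φ ⊆ Metric.closedBall 0 1 :=
  closure_minimal hφ.support_subset Metric.isClosed_closedBall

variable [FiniteDimensional ℝ E]

lemma hasCompactSupport (hφ : IsMollifierOfOrder μ m φ) : HasCompactSupport φ :=
  .of_support_subset_isCompact (isCompact_closedBall _ _) hφ.support_subset

lemma integrable [OpensMeasurableSpace E] [IsFiniteMeasureOnCompacts μ]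
    (hφ : IsMollifierOfOrder μ m φ) : Integrable φ μ :=
  hφ.contDiff.continuous.integrable_of_hasCompactSupport hφ.hasCompactSupport

variable [BorelSpace E] [μ.IsAddHaarMeasure]

lemma extrapolate (hφ : IsMollifierOfOrder μ m φ) (hr₀ : 0 < r) (hr₁ : r < 1) :
    IsMollifierOfOrder μ (m + 1) (extrapolate (m + 1) r φ) where
  contDiff := contDiff_extrapolate hφ.contDiff _ _
  support_subset := support_extrapolate_subset balanced_closedBall_zero hφ.support_subset hr₀.ne'
    (abs_le.2 ⟨by linarith, hr₁.le⟩)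
  integral_eq_one := by
    have hq : 1 - r ^ (m + 1) ≠ 0 := (sub_pos.2 (pow_lt_one₀ hr₀.le hr₁ m.succ_ne_zero)).ne'
    have h := integral_mul_extrapolate (d := m + 1) (μ := μ) (φ := φ) isPosHomogeneous_one
      (by simpa using hφ.integrable) hr₀
    simpa [hφ.integral_eq_one, hq] using h
  integral_mul_eq_zero k P hP hPint hk hkm := by
    have hPφ : Integrable (fun x => P x * φ x) μ :=
      hPint.integrable_smul_right_of_hasCompactSupport hφ.contDiff.continuous hφ.hasCompactSupport
    rw [integral_mul_extrapolate hP hPφ hr₀]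
    rcases hkm.eq_or_lt with rfl | hlt
    · rw [sub_self, mul_zero, zero_mul]
    · rw [hφ.integral_mul_eq_zero hP hPint hk (Nat.lt_succ_iff.1 hlt), mul_zero]

end IsMollifierOfOrder

variable [FiniteDimensional ℝ E] [BorelSpace E]

lemma exists_isMollifierOfOrder_zero (μ : Measure E) [μ.IsAddHaarMeasure] :
    ∃ φ : E → ℝ, IsMollifierOfOrder μ 0 φ ∧ ∫ x, |φ x| ∂μ = 1 := by
  let b : ContDiffBump (0 : E) := ⟨1 / 2, 1, by norm_num, by norm_num⟩
  refine ⟨b.normed μ, ⟨b.contDiff_normed, ?_, b.integral_normed, ?_⟩, ?_⟩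
  · exact b.support_normed_eq.trans_subset Metric.ball_subset_closedBall
  · intro k P _ _ hk hk₀
    omega
  · simp only [abs_of_nonneg (b.nonneg_normed _), b.integral_normed]

theorem exists_isMollifierOfOrder (μ : Measure E) [μ.IsAddHaarMeasure] (m : ℕ)
    {c : ℝ} (hc : 1 < c) : ∃ φ : E → ℝ, IsMollifierOfOrder μ m φ ∧ ∫ x, |φ x| ∂μ < c := by
  induction m with
  | zero =>
    obtain ⟨φ, hφ, hnorm⟩ := exists_isMollifierOfOrder_zero μ
    exact ⟨φ, hφ, hnorm.trans_lt hc⟩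
  | succ m ih =>
    obtain ⟨φ, hφ, hnorm⟩ := ih
    have hlim : Tendsto (fun r : ℝ => (1 - r ^ (m + 1))⁻¹ * (1 + r ^ (m + 1)) * ∫ x, |φ x| ∂μ)
        (𝓝[>] 0) (𝓝 (∫ x, |φ x| ∂μ)) := by
      have hcont : ContinuousAt
          (fun r : ℝ => (1 - r ^ (m + 1))⁻¹ * (1 + r ^ (m + 1)) * ∫ x, |φ x| ∂μ) 0 := by
        fun_prop (disch := simp)
      simpa using hcont.tendsto.mono_left nhdsWithin_le_nhds
    obtain ⟨r, hrc, hr₀, hr₁⟩ :=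
      ((hlim.eventually_lt_const hnorm).and (Ioo_mem_nhdsGT one_pos)).exists
    exact ⟨extrapolate (m + 1) r φ, hφ.extrapolate hr₀ hr₁,
      (integral_abs_extrapolate_le hφ.integrable hr₀ (pow_le_one₀ hr₀.le hr₁.le)).trans_lt hrc⟩

lemma IsMollifierOfOrder.integral_monomial_mul_eq_zero {n m : ℕ}
    {μ : Measure (EuclideanSpace ℝ (Fin n))} [IsLocallyFiniteMeasure μ]
    {φ : EuclideanSpace ℝ (Fin n) → ℝ} (hφ : IsMollifierOfOrder μ m φ) {α : Fin n → ℕ}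
    (hα : 1 ≤ ∑ i, α i) (hαm : ∑ i, α i ≤ m) : ∫ x, (∏ i, x i ^ α i) * φ x ∂μ = 0 :=
  hφ.integral_mul_eq_zero (isPosHomogeneous_monomial α)
    (Continuous.locallyIntegrable (by fun_prop)) hα hαm

end Mollifier

/-- Existence of an admissible mollifier net `(ψ_ε)_{ε ∈ (0,1]}` on ℝⁿ:
(i) support in the closed unit ball, (ii) unit integral, (iii) moderate growth of all
partial derivatives, (iv) finitely many vanishing moments, (v) L¹-norm eventually ≤ 1 + ν. -/
theorem admissible_mollifier_exists (n : ℕ) (hn : 1 ≤ n) :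
    ∃ ψ : ℝ → EuclideanSpace ℝ (Fin n) → ℝ,
      (∀ ε ∈ Set.Ioc (0:ℝ) 1, ContDiff ℝ (⊤ : ℕ∞) (ψ ε) ∧ HasCompactSupport (ψ ε)) ∧
      (∀ ε ∈ Set.Ioc (0:ℝ) 1, tsupport (ψ ε) ⊆ Metric.closedBall 0 1) ∧
      (∀ ε ∈ Set.Ioc (0:ℝ) 1, ∫ x, ψ ε x = 1) ∧
      (∀ α : Fin n → ℕ, ∃ p : ℝ, ∃ C : ℝ, ∀ᶠ ε in 𝓝[>] (0:ℝ),
        ∀ x, |mpderiv α (ψ ε) x| ≤ C * ε ^ (-p)) ∧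
      (∀ j : ℕ, ∃ ε₀ ∈ Set.Ioc (0:ℝ) 1, ∀ α : Fin n → ℕ,
        1 ≤ (∑ i, α i) → (∑ i, α i) ≤ j → ∀ ε : ℝ, 0 < ε → ε ≤ ε₀ →
          ∫ x, (∏ i, x i ^ α i) * ψ ε x = 0) ∧
      (∀ ν : ℝ, 0 < ν → ∃ ε₀ ∈ Set.Ioc (0:ℝ) 1, ∀ ε : ℝ, 0 < ε → ε ≤ ε₀ →
        ∫ x, |ψ ε x| ≤ 1 + ν) := by
  choose φ hφ hnorm using fun m : ℕ => exists_isMollifierOfOrder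
    (volume : Measure (EuclideanSpace ℝ (Fin n))) m (lt_add_of_pos_right 1 m.one_div_pos_of_nat)
  choose B hB using fun m =>
    exists_forall_abs_mpderiv_le (hφ m).contDiff (hφ m).hasCompactSupport fun _ => m
  obtain ⟨M, hM, hBM⟩ := exists_tendsto_atTop_eventually_comp_le tendsto_inv_nhdsGT_zero B
  refine ⟨fun ε => φ (M ε), fun ε _ => ⟨(hφ _).contDiff, (hφ _).hasCompactSupport⟩,
    fun ε _ => (hφ _).tsupport_subset, fun ε _ => (hφ _).integral_eq_one,
    fun α => ⟨1, 1, ?_⟩, fun j => ?_, fun ν hν => ?_⟩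
  · filter_upwards [hBM, eventually_all.2 fun i => hM.eventually_ge_atTop (α i)] with ε hBε hαε x
    rw [Real.rpow_neg_one, one_mul]
    exact (hB _ α hαε x).trans hBε
  · obtain ⟨ε₀, hε₀, hj⟩ :=
      exists_mem_Ioc_of_eventually_nhdsGT one_pos (hM.eventually_ge_atTop j)
    exact ⟨ε₀, hε₀, fun α hα hαj ε hε hεε₀ =>
      (hφ _).integral_monomial_mul_eq_zero hα (hαj.trans (hj ε hε hεε₀))⟩
  · have hlim := tendsto_one_div_add_atTop_nhds_zero_nat (𝕜 := ℝ) |>.comp hM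
    apply exists_mem_Ioc_of_eventually_nhdsGT one_pos
    filter_upwards [hlim.eventually_le_const hν] with ε hε
    exact (hnorm _).le.trans (add_le_add_right hε 1)
end

section
/- Let ψ ∈ C_c^∞(ℝ) with ∫ψ = 1 and set ρ_ε(x) := ε^{−1} ψ(x/ε), so ρ_ε''(x) = ε^{−3} ψ''(x/ε). Then for every continuous compactly supported f : ℝ → ℝ with f ≥ 0 and f(0) > 0, the net ∫_ℝ min(ρ_ε''(x), 0) f(x) dx tends to −∞ as ε → 0⁺. -/
open MeasureTheory Filter Topology

/-!
A monotone function with compact support vanishes, so the derivative of a nonzero compactly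
supported function takes negative values; hence so does every derivative `ψ⁽ⁿ⁾` with `n ≠ 0`,
and its negative part `φ` has positive integral. In dimension `d` the functions `c ^ d * φ (c • x)`
concentrate at the origin with constant mass as `c → ∞`, so their pairing with `f` tends to
`(∫ φ) * f 0`. The negative part of `ρ_ε⁽ⁿ⁾`, `ε = c⁻¹`, carries the factor `c ^ (n + 1)` instead of
`c ^ 1`, and the excess power of `c` forces the divergence.
-/

section NegativeDerivative

theorem eq_zero_of_monotone_of_hasCompactSupport {α β : Type*} [LinearOrder α] [TopologicalSpace α]
    [OrderClosedTopology α] [NoMinOrder α] [NoMaxOrder α] [PartialOrder β] [Zero β] {u : α → β}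
    (hu : Monotone u) (hc : HasCompactSupport u) : u = 0 := by
  have h_cocompact : u =ᶠ[cocompact α] 0 := by
    rw [← coclosedCompact_eq_cocompact]
    exact hasCompactSupport_iff_eventuallyEq.mp hc
  funext x
  have : Nonempty α := ⟨x⟩
  obtain ⟨a, hua, hax⟩ :=
    ((h_cocompact.filter_mono atBot_le_cocompact).and (eventually_le_atBot x)).exists
  obtain ⟨b, hub, hxb⟩ :=
    ((h_cocompact.filter_mono atTop_le_cocompact).and (eventually_ge_atTop x)).exists
  exact le_antisymm ((hu hxb).trans_eq hub) (hua.symm.trans_le (hu hax))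

theorem hasCompactSupport_iteratedDeriv {𝕜 E : Type*} [NontriviallyNormedField 𝕜]
    [NormedAddCommGroup E] [NormedSpace 𝕜 E] {u : 𝕜 → E} (hc : HasCompactSupport u) (n : ℕ) :
    HasCompactSupport (iteratedDeriv n u) := by
  induction n with
  | zero => rwa [iteratedDeriv_zero]
  | succ n ih => rw [iteratedDeriv_succ]; exact ih.deriv

variable {u : ℝ → ℝ}

theorem exists_deriv_neg_of_hasCompactSupport (hu : Differentiable ℝ u)
    (hc : HasCompactSupport u) (hu0 : u ≠ 0) : ∃ x, deriv u x < 0 := by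
  by_contra! h_nonneg
  exact hu0 (eq_zero_of_monotone_of_hasCompactSupport (monotone_of_deriv_nonneg hu h_nonneg) hc)

theorem exists_iteratedDeriv_succ_neg_of_hasCompactSupport {n : ℕ} (hu : ContDiff ℝ (n + 1) u)
    (hc : HasCompactSupport u) (hu0 : u ≠ 0) : ∃ x, iteratedDeriv (n + 1) u x < 0 := by
  have h_ne : iteratedDeriv n u ≠ 0 := by
    cases n with
    | zero => rwa [iteratedDeriv_zero]
    | succ n =>
      obtain ⟨x, hx⟩ := exists_iteratedDeriv_succ_neg_of_hasCompactSupport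
        (hu.of_le (by exact_mod_cast (n + 1).le_succ)) hc hu0
      exact fun h => hx.ne (congrFun h x)
  rw [iteratedDeriv_succ]
  exact exists_deriv_neg_of_hasCompactSupport (hu.differentiable_iteratedDeriv' n)
    (hasCompactSupport_iteratedDeriv hc n) h_ne

theorem integral_negPart_pos {X : Type*} [TopologicalSpace X] [MeasurableSpace X]
    [OpensMeasurableSpace X] {μ : Measure X} [μ.IsOpenPosMeasure] [IsFiniteMeasureOnCompacts μ]
    {g : X → ℝ} (hg : Continuous g) (hc : HasCompactSupport g) (h_neg : ∃ x, g x < 0) :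
    0 < ∫ x, (g x)⁻ ∂μ := by
  obtain ⟨x, hx⟩ := h_neg
  exact (continuous_negPart.comp hg).integral_pos_of_hasCompactSupport_nonneg_nonzero
    (hc.comp_left negPart_zero) (fun y => negPart_nonneg (g y)) (negPart_pos hx).ne'

end NegativeDerivative

section Concentration

variable {E F : Type*} [NormedAddCommGroup F] [NormedSpace ℝ F]
  [NormedAddCommGroup E] [NormedSpace ℝ E]

theorem eventually_support_comp_smul_subset {M : Type*} [Zero M] {φ : F → M}
    (hc : HasCompactSupport φ) {s : Set F} (hs : s ∈ 𝓝 0) :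
    ∀ᶠ c : ℝ in atTop, (Function.support fun x => φ (c • x)) ⊆ s := by
  have h_absorbs : Absorbs ℝ s (tsupport φ) := hc.isCompact.isVonNBounded ℝ hs
  have h_atTop : (atTop : Filter ℝ) ≤ Bornology.cobounded ℝ := by
    rw [Metric.cobounded_eq_cocompact]; exact atTop_le_cocompact
  filter_upwards [h_absorbs.eventually.filter_mono h_atTop, eventually_ne_atTop 0]
    with c h_subset hc0 x hx
  exact (Set.smul_mem_smul_set_iff₀ hc0 s x).mp (h_subset (subset_tsupport φ hx))

variable [FiniteDimensional ℝ F] [MeasurableSpace F] [BorelSpace F]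
  {μ : Measure F} [μ.IsAddHaarMeasure] {φ : F → ℝ}

theorem tendsto_integral_comp_smul_smul_of_hasCompactSupport [CompleteSpace E]
    (hφ : ∀ x, 0 ≤ φ x) (hc : HasCompactSupport φ) (hφ_int : ∫ x, φ x ∂μ = 1)
    {g : F → E} (hg : IntegrableAtFilter g (𝓝 0) μ) (hg0 : ContinuousAt g 0) :
    Tendsto (fun c : ℝ => ∫ x, (c ^ Module.finrank ℝ F * φ (c • x)) • g x ∂μ) atTop
      (𝓝 (g 0)) := by
  obtain ⟨s, hs, hgs⟩ := hg
  obtain ⟨t, hts, ht_open, h0t⟩ := mem_nhds_iff.mp hs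
  have ht : t ∈ 𝓝 0 := ht_open.mem_nhds h0t
  have h_int : Integrable (t.indicator g) μ :=
    (hgs.mono_set hts).integrable_indicator ht_open.measurableSet
  have h_eq : t.indicator g =ᶠ[𝓝 0] g := eventuallyEq_of_mem ht (Set.eqOn_indicator)
  have h_decay : Tendsto (fun x => ‖x‖ ^ Module.finrank ℝ F * φ x) (Bornology.cobounded F)
      (𝓝 0) := by
    refine tendsto_const_nhds.congr' ?_
    rw [Metric.cobounded_eq_cocompact, ← coclosedCompact_eq_cocompact]
    filter_upwards [hasCompactSupport_iff_eventuallyEq.mp hc] with x hx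
    simp [hx]
  have h_lim := tendsto_integral_comp_smul_smul_of_integrable hφ hφ_int h_decay h_int
    (hg0.congr h_eq.symm)
  rw [Set.indicator_of_mem h0t] at h_lim
  refine h_lim.congr' ?_
  filter_upwards [eventually_support_comp_smul_subset hc ht] with c h_supp
  refine integral_congr_ae (.of_forall fun x => ?_)
  by_cases hx : x ∈ t
  · simp [hx]
  · simp [Function.notMem_support.mp fun h => hx (h_supp h)]

theorem tendsto_integral_pow_mul_comp_smul_mul_atTop
    (hφ : ∀ x, 0 ≤ φ x) (hc : HasCompactSupport φ) (hφ_int : 0 < ∫ x, φ x ∂μ)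
    {f : F → ℝ} (hf : IntegrableAtFilter f (𝓝 0) μ) (hf_cont : ContinuousAt f 0) (hf0 : 0 < f 0)
    {k : ℕ} (hk : Module.finrank ℝ F < k) :
    Tendsto (fun c : ℝ => ∫ x, c ^ k * φ (c • x) * f x ∂μ) atTop atTop := by
  set I := ∫ x, φ x ∂μ
  set d := Module.finrank ℝ F
  have h_lim : Tendsto (fun c : ℝ => ∫ x, (c ^ d * (I⁻¹ * φ (c • x))) • f x ∂μ) atTop
      (𝓝 (f 0)) := by
    refine tendsto_integral_comp_smul_smul_of_hasCompactSupport (φ := fun x => I⁻¹ * φ x)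
      (fun x => mul_nonneg (inv_nonneg.mpr hφ_int.le) (hφ x)) hc.mul_left ?_ hf hf_cont
    rw [integral_const_mul, inv_mul_cancel₀ hφ_int.ne']
  have h_excess : Tendsto (fun c : ℝ => I * c ^ (k - d)) atTop atTop :=
    (tendsto_pow_atTop (Nat.sub_pos_of_lt hk).ne').const_mul_atTop hφ_int
  refine (h_excess.atTop_mul_pos hf0 h_lim).congr fun c => ?_
  rw [← integral_const_mul]
  refine integral_congr_ae (.of_forall fun x => ?_)
  calc I * c ^ (k - d) * ((c ^ d * (I⁻¹ * φ (c • x))) • f x)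
      = I * I⁻¹ * (c ^ (k - d) * c ^ d) * φ (c • x) * f x := by rw [smul_eq_mul]; ring
    _ = c ^ k * φ (c • x) * f x := by
      rw [mul_inv_cancel₀ hφ_int.ne', one_mul, pow_sub_mul_pow c hk.le]

end Concentration

theorem min_mul_zero_eq_neg_mul_negPart {R : Type*} [CommRing R] [LinearOrder R]
    [IsStrictOrderedRing R] {a : R} (ha : 0 ≤ a) (b : R) : min (a * b) 0 = -(a * b⁻) := by
  rw [negPart_eq_neg_inf_zero, mul_neg, neg_neg, mul_min_of_nonneg _ _ ha, mul_zero]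

theorem neg_part_of_delta_second_deriv_net_diverges_general {n : ℕ} (hn : n ≠ 0)
    {ψ : ℝ → ℝ} (hψ : ContDiff ℝ n ψ) (hψc : HasCompactSupport ψ) (hψ0 : ψ ≠ 0)
    {f : ℝ → ℝ} (hf : IntegrableAtFilter f (𝓝 0)) (hf_cont : ContinuousAt f 0) (hf0 : 0 < f 0) :
    Tendsto
      (fun ε : ℝ => ∫ x, min ((ε ^ (n + 1))⁻¹ * iteratedDeriv n ψ (x / ε)) 0 * f x)
      (𝓝[>] (0 : ℝ)) atBot := by
  obtain ⟨m, rfl⟩ := Nat.exists_eq_succ_of_ne_zero hn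
  set g := iteratedDeriv (m + 1) ψ
  have hgc : HasCompactSupport g := hasCompactSupport_iteratedDeriv hψc _
  have h_mass : 0 < ∫ y, (g y)⁻ :=
    integral_negPart_pos (hψ.continuous_iteratedDeriv' _) hgc
      (exists_iteratedDeriv_succ_neg_of_hasCompactSupport (by exact_mod_cast hψ) hψc hψ0)
  have h_atTop : Tendsto (fun c : ℝ => ∫ x, c ^ (m + 2) * (g (c • x))⁻ * f x) atTop atTop :=
    tendsto_integral_pow_mul_comp_smul_mul_atTop (fun y => negPart_nonneg (g y))
      (hgc.comp_left negPart_zero) h_mass hf hf_cont hf0 (by simp)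
  refine (tendsto_neg_atTop_atBot.comp (h_atTop.comp tendsto_inv_nhdsGT_zero)).congr' ?_
  filter_upwards [self_mem_nhdsWithin] with ε (hε : 0 < ε)
  simp only [Function.comp_apply, ← integral_neg, smul_eq_mul, inv_pow, div_eq_inv_mul,
    min_mul_zero_eq_neg_mul_negPart (inv_nonneg.mpr (pow_pos hε _).le), neg_mul]

/-- The integral of the negative part of the mollified second derivative of the delta
distribution diverges: for `ρ_ε''(x) = ε⁻³ ψ''(x/ε)` and any continuous compactly
supported `f ≥ 0` with `f(0) > 0`, `∫ min(ρ_ε'', 0) f → −∞` as `ε → 0⁺`. -/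
theorem neg_part_of_delta_second_deriv_net_diverges
    (ψ : ℝ → ℝ) (hψ : ContDiff ℝ (⊤ : ℕ∞) ψ) (hψc : HasCompactSupport ψ)
    (hψ_int : ∫ t, ψ t = 1)
    (f : ℝ → ℝ) (hf : Continuous f) (hfc : HasCompactSupport f)
    (hf_nonneg : ∀ x, 0 ≤ f x) (hf0 : 0 < f 0) :
    Tendsto
      (fun ε : ℝ => ∫ x, min ((ε ^ 3)⁻¹ * deriv (deriv ψ) (x / ε)) 0 * f x)
      (𝓝[>] (0:ℝ)) atBot := by
  have hψ0 : ψ ≠ 0 := by rintro rfl; simp at hψ_int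
  simpa only [iteratedDeriv_succ, iteratedDeriv_zero] using
    neg_part_of_delta_second_deriv_net_diverges_general two_ne_zero
      (contDiff_infty.mp hψ 2) hψc hψ0 (hf.locallyIntegrable 0) hf.continuousAt hf0
end
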